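/- Assume further that there is W₀ ∈ ℝ with ∫_0^∞ Θ(u) du = Φ/q − W₀ and ∫_0^∞ e^{−φu} Θ(u) du = (φ−Φ)/(δφ) − W₀. If h(y) = a y + η for reals a, η, then I(b) = (δΦ/φ)( a/q − β ) for every b ∈ ℝ; in particular I is identically zero if and only if a = qβ. -/

import Mathlib

open MeasureTheory Set Filter

/-!
On the negative half-line `G` is the convolution of the reflection of `Θ` with the exponential
kernel `e^{-φz}` on `z > 0`. Integrating out `y < 0` first replaces the kernel by its primitive
`(1 - e^{-φu}) / φ`, so `∫_{y<0} G(y) dy` is `1 / φ` times the difference of the two prescribed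
integrals of `Θ`, in which `W₀` cancels. As `h' = a`, the part `-a(φ - Φ) / φ²` of the second
term of `I(b)` cancels the first term, and what is left does not depend on `b`.
-/

open Real
open scoped Convolution

theorem setIntegral_convolution {𝕜 G E E' F : Type*} [RCLike 𝕜]
    [NormedAddCommGroup E] [NormedSpace 𝕜 E]
    [NormedAddCommGroup E'] [NormedSpace ℝ E'] [NormedSpace 𝕜 E'] [CompleteSpace E']
    [NormedAddCommGroup F] [NormedSpace ℝ F] [NormedSpace 𝕜 F] [CompleteSpace F]
    [AddGroup G] [MeasurableSpace G] [MeasurableAdd₂ G] [MeasurableNeg G]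
    {μ ν : Measure G} [SFinite μ] [SFinite ν] [μ.IsAddRightInvariant]
    (L : E →L[𝕜] E' →L[𝕜] F) {f : G → E} {g : G → E'}
    (hf : Integrable f ν) (hg : Integrable g μ) (s : Set G) :
    ∫ x in s, (f ⋆[L, ν] g) x ∂μ = ∫ t, L (f t) (∫ x in s, g (x - t) ∂μ) ∂ν := by
  have hint : Integrable (fun p : G × G => L (f p.2) (g (p.1 - p.2))) ((μ.restrict s).prod ν) :=
    (hf.convolution_integrand L hg).mono_measure (Measure.prod_mono Measure.restrict_le_self le_rfl)
  calc ∫ x in s, (f ⋆[L, ν] g) x ∂μ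
      = ∫ t, ∫ x in s, L (f t) (g (x - t)) ∂μ ∂ν := integral_integral_swap hint
    _ = ∫ t, L (f t) (∫ x in s, g (x - t) ∂μ) ∂ν :=
        integral_congr_ae <| .of_forall fun t =>
          (L (f t)).integral_comp_comm (hg.comp_sub_right t).restrict

theorem setIntegral_Iio_comp_sub_right {G E : Type*} [AddCommGroup G] [PartialOrder G]
    [IsOrderedAddMonoid G] [MeasurableSpace G] [MeasurableAdd G] {μ : Measure G}
    [μ.IsAddRightInvariant] [NormedAddCommGroup E] [NormedSpace ℝ E] (f : G → E) (c t : G) :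
    ∫ x in Iio c, f (x - t) ∂μ = ∫ x in Iio (c - t), f x ∂μ := by
  simpa only [preimage_sub_const_Iio, sub_add_cancel] using
    (measurePreserving_sub_right μ t).setIntegral_preimage_emb
      (MeasurableEquiv.subRight t).measurableEmbedding f (Iio (c - t))

theorem integral_exp_neg_mul {φ : ℝ} (hφ : φ ≠ 0) (u : ℝ) :
    ∫ z in 0..u, exp (-φ * z) = φ⁻¹ * (1 - exp (-φ * u)) := by
  rw [intervalIntegral.integral_comp_mul_left _ (neg_ne_zero.2 hφ), integral_exp, smul_eq_mul,
    mul_zero, exp_zero]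
  ring

theorem integrableOn_Ioi_exp_neg_mul_smul {E : Type*} [NormedAddCommGroup E] [NormedSpace ℝ E]
    {f : ℝ → E} {φ : ℝ} (hφ : 0 ≤ φ) (hf : IntegrableOn f (Ioi 0)) :
    IntegrableOn (fun u => exp (-φ * u) • f u) (Ioi 0) := by
  refine Integrable.bdd_smul hf 1 (by fun_prop) ?_
  filter_upwards [ae_restrict_mem measurableSet_Ioi] with u hu
  rw [norm_eq_abs, abs_exp, exp_le_one_iff, neg_mul, neg_nonpos]
  exact mul_nonneg hφ (le_of_lt hu)

section SMul

variable {E : Type*} [NormedAddCommGroup E] [NormedSpace ℝ E] [CompleteSpace E]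
  {k : ℝ → ℝ} {f : ℝ → E}

theorem setIntegral_Iio_integral_smul_comp_sub (hk : Integrable k) (hf : Integrable f) (c : ℝ) :
    ∫ y in Iio c, ∫ z, k z • f (z - y) = ∫ u, (∫ z in Iio (c + u), k z) • f u := by
  let L : E →L[ℝ] ℝ →L[ℝ] E := (ContinuousLinearMap.lsmul ℝ ℝ).flip
  have hconv (y : ℝ) : ∫ z, k z • f (z - y) = ((fun t => f (-t)) ⋆[L] k) y := by
    rw [← integral_sub_left_eq_self _ volume y]
    simp [L, convolution_def]
  calc ∫ y in Iio c, ∫ z, k z • f (z - y)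
      = ∫ t, (∫ y in Iio c, k (y - t)) • f (-t) := by
        simp_rw [hconv]
        exact setIntegral_convolution L hf.comp_neg hk (Iio c)
    _ = ∫ t, (∫ z in Iio (c - t), k z) • f (-t) := by
        simp_rw [setIntegral_Iio_comp_sub_right k]
    _ = ∫ u, (∫ z in Iio (c + u), k z) • f u := by
        rw [← integral_neg_eq_self]
        simp only [neg_neg, sub_neg_eq_add]

theorem setIntegral_Iio_setIntegral_Ioi_smul_comp_sub
    (hk : IntegrableOn k (Ioi 0)) (hf : IntegrableOn f (Ioi 0)) :
    ∫ y in Iio 0, ∫ z in Ioi 0, k z • f (z - y) = ∫ u in Ioi 0, (∫ z in 0..u, k z) • f u := by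
  have hinner : ∀ y ∈ Iio (0 : ℝ), ∫ z in Ioi 0, k z • f (z - y) =
      ∫ z, (Ioi 0).indicator k z • (Ioi 0).indicator f (z - y) := by
    intro y hy
    rw [← integral_indicator measurableSet_Ioi]
    congr 1 with z
    by_cases hz : 0 < z
    · have hzy : 0 < z - y := sub_pos.2 (hy.trans hz)
      simp [hz, hzy]
    · simp [hz]
  have hprimitive : ∀ u ∈ Ioi (0 : ℝ),
      ∫ z in Iio u, (Ioi 0).indicator k z = ∫ z in 0..u, k z := by
    intro u hu
    rw [setIntegral_indicator measurableSet_Ioi, Iio_inter_Ioi,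
      intervalIntegral.integral_of_le (le_of_lt hu), integral_Ioc_eq_integral_Ioo]
  calc ∫ y in Iio 0, ∫ z in Ioi 0, k z • f (z - y)
      = ∫ y in Iio 0, ∫ z, (Ioi 0).indicator k z • (Ioi 0).indicator f (z - y) :=
        setIntegral_congr_fun measurableSet_Iio hinner
    _ = ∫ u, (∫ z in Iio u, (Ioi 0).indicator k z) • (Ioi 0).indicator f u := by
        simpa only [zero_add] using setIntegral_Iio_integral_smul_comp_sub
          (hk.integrable_indicator measurableSet_Ioi) (hf.integrable_indicator measurableSet_Ioi) 0
    _ = ∫ u in Ioi 0, (∫ z in Iio u, (Ioi 0).indicator k z) • f u := by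
        simp_rw [← integral_indicator measurableSet_Ioi, indicator_smul]
    _ = ∫ u in Ioi 0, (∫ z in 0..u, k z) • f u :=
        setIntegral_congr_fun measurableSet_Ioi fun u hu => by simp only [hprimitive u hu]

theorem setIntegral_Iio_setIntegral_Ioi_exp_neg_mul_smul_comp_sub {φ : ℝ} (hφ : 0 < φ)
    (hf : IntegrableOn f (Ioi 0)) :
    ∫ y in Iio 0, ∫ z in Ioi 0, exp (-φ * z) • f (z - y) =
      φ⁻¹ • ((∫ u in Ioi 0, f u) - ∫ u in Ioi 0, exp (-φ * u) • f u) := by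
  rw [setIntegral_Iio_setIntegral_Ioi_smul_comp_sub (exp_neg_integrableOn_Ioi 0 hφ) hf,
    ← integral_sub hf (integrableOn_Ioi_exp_neg_mul_smul hφ.le hf), ← integral_smul]
  simp_rw [integral_exp_neg_mul hφ.ne', mul_smul, sub_smul, one_smul]

end SMul

theorem stmt8_general {q δ β Φ φ : ℝ} (hq : q ≠ 0) (hδ : δ ≠ 0) (hΦ : Φ ≠ 0) (hφ : 0 < φ)
    {Θ h G I : ℝ → ℝ}
    (hG : ∀ y ∈ Iio (0 : ℝ), G y = ∫ z in Ioi (0 : ℝ), exp (-φ * z) * Θ (z - y))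
    (hI : ∀ b : ℝ, I b =
      (φ - Φ) / φ * (∫ y in Ioi (0 : ℝ), deriv h (y + b) * exp (-φ * y))
      + δ * ((∫ y in Iio (0 : ℝ), deriv h (y + b) * G y) - β * Φ / φ))
    {W₀ : ℝ} (hΘ1 : ∫ u in Ioi (0 : ℝ), Θ u = Φ / q - W₀)
    (hΘ2 : ∫ u in Ioi (0 : ℝ), exp (-φ * u) * Θ u = (φ - Φ) / (δ * φ) - W₀)
    (hΘint : IntegrableOn Θ (Ioi 0))
    {a η : ℝ} (haff : ∀ y : ℝ, h y = a * y + η) :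
    (∀ b : ℝ, I b = (δ * Φ / φ) * (a / q - β)) ∧ ((∀ b : ℝ, I b = 0) ↔ a = q * β) := by
  have hderiv (y : ℝ) : deriv h y = a := by simp [funext haff]
  have hexp : ∫ y in Ioi (0 : ℝ), exp (-φ * y) = 1 / φ := by
    rw [integral_exp_mul_Ioi (neg_neg_of_pos hφ), mul_zero, exp_zero, neg_div_neg_eq]
  have hGint : ∫ y in Iio (0 : ℝ), G y = φ⁻¹ * (Φ / q - (φ - Φ) / (δ * φ)) := by
    rw [setIntegral_congr_fun measurableSet_Iio hG]
    simp_rw [← smul_eq_mul (exp _)] at hΘ2 ⊢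
    rw [setIntegral_Iio_setIntegral_Ioi_exp_neg_mul_smul_comp_sub hφ hΘint, hΘ1, hΘ2,
      sub_sub_sub_cancel_right, smul_eq_mul]
  have hconst (b : ℝ) : I b = (δ * Φ / φ) * (a / q - β) := by
    simp_rw [hI b, hderiv, integral_const_mul, hexp, hGint]
    field_simp
    ring
  have hcoeff : δ * Φ / φ ≠ 0 := div_ne_zero (mul_ne_zero hδ hΦ) hφ.ne'
  refine ⟨hconst, ?_⟩
  simp_rw [hconst, forall_const, mul_eq_zero, hcoeff, false_or, sub_eq_zero, div_eq_iff hq,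
    mul_comm]

/-- Example 3.3: for the affine cost `h(y) = a y + η`,
`I(b) = (δΦ/φ)(a/q - β)` for every `b`; in particular `I ≡ 0` iff `a = qβ`. -/
theorem stmt8
    (q δ β Φ φ : ℝ)
    (hq : 0 < q) (hδ : 0 < δ) (hΦ : 0 < Φ) (hΦφ : Φ < φ)
    (Θ : ℝ → ℝ) (hΘmeas : Measurable Θ) (hΘnn : ∀ u ∈ Set.Ioi (0 : ℝ), 0 ≤ Θ u)
    (h : ℝ → ℝ) (hconv : ConvexOn ℝ Set.univ h) (hdiff : Differentiable ℝ h)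
    (G : ℝ → ℝ)
    (hG : ∀ y ∈ Set.Iio (0 : ℝ),
      G y = ∫ z in Set.Ioi (0 : ℝ), Real.exp (-φ * z) * Θ (z - y))
    (hint1 : ∀ b : ℝ,
      IntegrableOn (fun y => deriv h (y + b) * Real.exp (-φ * y)) (Set.Ioi 0))
    (hint2 : ∀ b : ℝ,
      IntegrableOn (fun y => deriv h (y + b) * G y) (Set.Iio 0))
    (I : ℝ → ℝ)
    (hI : ∀ b : ℝ, I b =
      (φ - Φ) / φ * (∫ y in Set.Ioi (0 : ℝ), deriv h (y + b) * Real.exp (-φ * y))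
      + δ * ((∫ y in Set.Iio (0 : ℝ), deriv h (y + b) * G y) - β * Φ / φ))
    (W₀ : ℝ)
    (hΘ1 : ∫ u in Set.Ioi (0 : ℝ), Θ u = Φ / q - W₀)
    (hΘ2 : ∫ u in Set.Ioi (0 : ℝ), Real.exp (-φ * u) * Θ u = (φ - Φ) / (δ * φ) - W₀)
    (hΘint : IntegrableOn Θ (Set.Ioi 0))
    (a η : ℝ)
    (haff : ∀ y : ℝ, h y = a * y + η) :
    (∀ b : ℝ, I b = (δ * Φ / φ) * (a / q - β)) ∧
    ((∀ b : ℝ, I b = 0) ↔ a = q * β) := by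
  exact stmt8_general hq.ne' hδ.ne' hΦ.ne' (hΦ.trans hΦφ) hG hI hΘ1 hΘ2 hΘint haff
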